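/- Under the hypotheses of the Hamiltonian derivative identity — M : ℝ → Matrix (Fin n) (Fin n) ℝ differentiable symmetric-valued, C : ℝ → Matrix (Fin n) (Fin n) ℝ with M'(t) − 2C(t) skew-symmetric, J : ℝ → Matrix (Fin 3) (Fin n) ℝ, v : ℝ → ℝⁿ differentiable, y₁, y₂ : ℝ → ℝ³ differentiable with y₁' = J·v and y₂' = u₂, κ > 0, K_D symmetric, dynamics M·v' + C·v + τ_g = u + τ_ext with interface u = τ_g − 2κ·Jᵀ(y₁ − y₂) − K_D(v − Jᵀu₂) — assume additionally that K_D is positive semidefinite. Then the closed-loop Hamiltonian H(t) := (1/2)⟨v(t), M(t)v(t)⟩ + κ‖y₁(t) − y₂(t)‖² satisfies H'(t) ≤ ⟨J(t)·K_D·v(t) − 2κ·(y₁(t) − y₂(t)), u₂(t)⟩ + ⟨v(t), τ_ext(t)⟩ for all t. In particular, if u₂ ≡ 0 then H'(t) ≤ ⟨v(t), τ_ext(t)⟩ (passivity from external disturbance torques to generalized velocity), and if τ_ext ≡ 0 then H'(t) ≤ ⟨J(t)·K_D·v(t) − 2κ·(y₁(t) − y₂(t)), u₂(t)⟩. -/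

import Mathlib

open Matrix

/-!
Differentiating the kinetic energy, symmetry of `M` collects the two terms in `v'` and skewness of
`M' - 2C` replaces `½⟨v, M'v⟩` by `⟨v, Cv⟩`, so the kinetic power is `⟨v, Mv' + Cv⟩`. The interface
cancels gravity, which leaves the spring, damping and external torques. The spring torque
`-2κJᵀ(y₁ - y₂)` does work at the rate `-2κ⟨y₁ - y₂, Jv⟩`, which cancels against the derivative of
`κ‖y₁ - y₂‖²` up to the term `-2κ⟨y₁ - y₂, u₂⟩`. The damping torque contributes
`⟨JK_D v, u₂⟩ - ⟨v, K_D v⟩`, whose last term is the dissipation.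
-/

section MatrixAlgebra

variable {R ι ι' : Type*} [Fintype ι] [Fintype ι']

theorem dotProduct_mulVec_comm_of_isSymm [NonUnitalCommSemiring R] {A : Matrix ι ι R}
    (hA : A.IsSymm) (x y : ι → R) : x ⬝ᵥ A *ᵥ y = y ⬝ᵥ A *ᵥ x := by
  rw [← dotProduct_transpose_mulVec, hA.eq]

theorem dotProduct_mulVec_self_eq_zero_of_transpose_eq_neg [NonUnitalCommRing R]
    [IsAddTorsionFree R] {A : Matrix ι ι R} (hA : Aᵀ = -A) (x : ι → R) : x ⬝ᵥ A *ᵥ x = 0 := by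
  refine self_eq_neg.mp ?_
  rw [← dotProduct_neg, ← neg_mulVec, ← hA, dotProduct_transpose_mulVec]

theorem interface_power_add_spring_power [CommRing R] {K : Matrix ι ι R} (hK : K.IsSymm)
    (k : R) (J : Matrix ι' ι R) (v : ι → R) (e u : ι' → R) :
    v ⬝ᵥ (-((2 * k) • Jᵀ *ᵥ e) - K *ᵥ (v - Jᵀ *ᵥ u)) + 2 * k * (e ⬝ᵥ (J *ᵥ v - u))
      = (J *ᵥ K *ᵥ v - (2 * k) • e) ⬝ᵥ u - v ⬝ᵥ K *ᵥ v := by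
  have spring_power : v ⬝ᵥ Jᵀ *ᵥ e = e ⬝ᵥ J *ᵥ v := dotProduct_transpose_mulVec J v e
  have damping_power : v ⬝ᵥ K *ᵥ Jᵀ *ᵥ u = J *ᵥ K *ᵥ v ⬝ᵥ u := by
    rw [dotProduct_mulVec_comm_of_isSymm hK, dotProduct_comm, dotProduct_transpose_mulVec,
      dotProduct_comm]
  simp only [dotProduct_sub, dotProduct_neg, dotProduct_smul, sub_dotProduct, smul_dotProduct,
    smul_eq_mul, mulVec_sub, spring_power, damping_power]
  ring

end MatrixAlgebra

section Derivatives

variable {𝕜 : Type*} [NontriviallyNormedField 𝕜] {ι ι' : Type*} [Fintype ι] {t : 𝕜}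

section Algebra

variable {𝔸 : Type*} [NormedRing 𝔸] [NormedAlgebra 𝕜 𝔸]

theorem hasDerivAt_dotProduct {v w : 𝕜 → ι → 𝔸} {v' w' : ι → 𝔸}
    (hv : HasDerivAt v v' t) (hw : HasDerivAt w w' t) :
    HasDerivAt (fun s => v s ⬝ᵥ w s) (v' ⬝ᵥ w t + v t ⬝ᵥ w') t := by
  simp only [dotProduct, ← Finset.sum_add_distrib]
  exact HasDerivAt.fun_sum fun i _ => (hasDerivAt_pi.1 hv i).fun_mul (hasDerivAt_pi.1 hw i)

theorem hasDerivAt_mulVec {M : 𝕜 → Matrix ι' ι 𝔸} {M' : Matrix ι' ι 𝔸} {v : 𝕜 → ι → 𝔸}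
    {v' : ι → 𝔸} (hM : ∀ i j, HasDerivAt (fun s => M s i j) (M' i j) t) (hv : HasDerivAt v v' t) :
    HasDerivAt (fun s => M s *ᵥ v s) (M' *ᵥ v t + M t *ᵥ v') t :=
  hasDerivAt_pi.2 fun i => hasDerivAt_dotProduct (hasDerivAt_pi.2 (hM i)) hv

end Algebra

theorem hasDerivAt_dotProduct_mulVec_self {M : 𝕜 → Matrix ι ι 𝕜} {M' : Matrix ι ι 𝕜}
    {v : 𝕜 → ι → 𝕜} {v' : ι → 𝕜} (hM : ∀ i j, HasDerivAt (fun s => M s i j) (M' i j) t)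
    (hMsymm : (M t).IsSymm) (hv : HasDerivAt v v' t) :
    HasDerivAt (fun s => v s ⬝ᵥ M s *ᵥ v s) (v t ⬝ᵥ M' *ᵥ v t + 2 * (v t ⬝ᵥ M t *ᵥ v')) t := by
  refine (hasDerivAt_dotProduct hv (hasDerivAt_mulVec hM hv)).congr_deriv ?_
  rw [dotProduct_mulVec_comm_of_isSymm hMsymm, dotProduct_add]
  ring

end Derivatives

section ClosedLoop

variable {ι ι' : Type*} [Fintype ι] [Fintype ι']
  {y₁ y₂ : ℝ → EuclideanSpace ℝ ι'} {u₂ : EuclideanSpace ℝ ι'} {J : Matrix ι' ι ℝ}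
  {M : ℝ → Matrix ι ι ℝ} {M' C K_D : Matrix ι ι ℝ}
  {v : ℝ → ι → ℝ} {v' τg τext : ι → ℝ} {κ t : ℝ}

/-- The closed-loop Hamiltonian at time `s`: the kinetic energy of the full-order system with
inertia matrix `M` and generalized velocity `v`, plus the energy of a virtual spring of
stiffness `2κ` between its task-space output `y₁` and the reduced-order output `y₂`. -/
noncomputable def closedLoopHamiltonian (κ : ℝ) (M : ℝ → Matrix ι ι ℝ) (v : ℝ → ι → ℝ)
    (y₁ y₂ : ℝ → EuclideanSpace ℝ ι') (s : ℝ) : ℝ :=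
  (1 / 2) * (v s ⬝ᵥ M s *ᵥ v s) + κ * ‖y₁ s - y₂ s‖ ^ 2

theorem hasDerivAt_kineticEnergy (hM : ∀ i j, HasDerivAt (fun s => M s i j) (M' i j) t)
    (hMsymm : (M t).IsSymm) (hv : HasDerivAt v v' t)
    (hskew : (M' - (2 : ℝ) • C)ᵀ = -(M' - (2 : ℝ) • C)) :
    HasDerivAt (fun s => (1 / 2) * (v s ⬝ᵥ M s *ᵥ v s)) (v t ⬝ᵥ (M t *ᵥ v' + C *ᵥ v t)) t := by
  refine ((hasDerivAt_dotProduct_mulVec_self hM hMsymm hv).const_mul (1 / 2)).congr_deriv ?_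
  have coriolis_power : v t ⬝ᵥ M' *ᵥ v t - 2 * (v t ⬝ᵥ C *ᵥ v t) = 0 := by
    simpa only [sub_mulVec, smul_mulVec, dotProduct_sub, dotProduct_smul, smul_eq_mul]
      using dotProduct_mulVec_self_eq_zero_of_transpose_eq_neg hskew (v t)
  rw [dotProduct_add]
  linarith

theorem hasDerivAt_springEnergy (κ : ℝ) {e : ℝ → EuclideanSpace ℝ ι'} {e' : EuclideanSpace ℝ ι'}
    (he : HasDerivAt e e' t) :
    HasDerivAt (fun s => κ * ‖e s‖ ^ 2) (2 * κ * ((e t).ofLp ⬝ᵥ e'.ofLp)) t := by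
  refine (he.norm_sq.const_mul κ).congr_deriv ?_
  rw [EuclideanSpace.inner_eq_star_dotProduct, star_trivial, dotProduct_comm]
  ring

theorem hasDerivAt_closedLoopHamiltonian
    (hM : ∀ i j, HasDerivAt (fun s => M s i j) (M' i j) t) (hMsymm : (M t).IsSymm)
    (hv : HasDerivAt v v' t) (hy₁ : HasDerivAt y₁ (WithLp.toLp 2 (J *ᵥ v t)) t)
    (hy₂ : HasDerivAt y₂ u₂ t) (hKD : K_D.IsSymm)
    (hskew : (M' - (2 : ℝ) • C)ᵀ = -(M' - (2 : ℝ) • C))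
    (hdyn : M t *ᵥ v' + C *ᵥ v t + τg =
      (τg - (2 * κ) • Jᵀ *ᵥ (y₁ t - y₂ t).ofLp - K_D *ᵥ (v t - Jᵀ *ᵥ u₂.ofLp)) + τext) :
    HasDerivAt (closedLoopHamiltonian κ M v y₁ y₂)
      ((J *ᵥ K_D *ᵥ v t - (2 * κ) • (y₁ t - y₂ t).ofLp) ⬝ᵥ u₂.ofLp + v t ⬝ᵥ τext
        - v t ⬝ᵥ K_D *ᵥ v t) t := by
  have net_torque : M t *ᵥ v' + C *ᵥ v t =
      (-((2 * κ) • Jᵀ *ᵥ (y₁ t - y₂ t).ofLp) - K_D *ᵥ (v t - Jᵀ *ᵥ u₂.ofLp)) + τext := by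
    rw [← add_left_inj τg, hdyn]
    abel
  have kinetic := hasDerivAt_kineticEnergy hM hMsymm hv hskew
  have spring : HasDerivAt (fun s => κ * ‖y₁ s - y₂ s‖ ^ 2)
      (2 * κ * ((y₁ t - y₂ t).ofLp ⬝ᵥ (J *ᵥ v t - u₂.ofLp))) t :=
    hasDerivAt_springEnergy κ (hy₁.fun_sub hy₂)
  refine (kinetic.fun_add spring).congr_deriv ?_
  rw [net_torque, dotProduct_add, add_right_comm, interface_power_add_spring_power hKD,
    sub_add_eq_add_sub]

theorem stmt_5_general
    (hM : ∀ i j, HasDerivAt (fun s => M s i j) (M' i j) t) (hMsymm : (M t).IsSymm)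
    (hv : HasDerivAt v v' t) (hy₁ : HasDerivAt y₁ (WithLp.toLp 2 (J *ᵥ v t)) t)
    (hy₂ : HasDerivAt y₂ u₂ t) (hKDpsd : K_D.PosSemidef)
    (hskew : (M' - (2 : ℝ) • C)ᵀ = -(M' - (2 : ℝ) • C))
    (hdyn : M t *ᵥ v' + C *ᵥ v t + τg =
      (τg - (2 * κ) • Jᵀ *ᵥ (y₁ t - y₂ t).ofLp - K_D *ᵥ (v t - Jᵀ *ᵥ u₂.ofLp)) + τext) :
    deriv (closedLoopHamiltonian κ M v y₁ y₂) t
      ≤ (J *ᵥ K_D *ᵥ v t - (2 * κ) • (y₁ t - y₂ t).ofLp) ⬝ᵥ u₂.ofLp + v t ⬝ᵥ τext := by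
  have hKD : K_D.IsSymm := by simpa using hKDpsd.isHermitian
  have dissipation_nonneg : 0 ≤ v t ⬝ᵥ K_D *ᵥ v t := hKDpsd.dotProduct_mulVec_nonneg (v t)
  rw [(hasDerivAt_closedLoopHamiltonian hM hMsymm hv hy₁ hy₂ hKD hskew hdyn).deriv]
  exact sub_le_self _ dissipation_nonneg

end ClosedLoop

/-- Corollary 1 of the paper, passivity: under the hypotheses of the
Hamiltonian derivative identity, with `K_D` additionally positive semidefinite, the
closed-loop Hamiltonian `H = (1/2)⟨v, M v⟩ + κ‖y₁ − y₂‖²` satisfies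
`Ḣ ≤ ⟨J K_D v − 2κ(y₁ − y₂), u₂⟩ + ⟨v, τ_ext⟩`; in particular `Ḣ ≤ ⟨v, τ_ext⟩` when
`u₂ ≡ 0`, and `Ḣ ≤ ⟨J K_D v − 2κ(y₁ − y₂), u₂⟩` when `τ_ext ≡ 0`. -/
theorem stmt_5 (n : ℕ)
    (M M' : ℝ → Matrix (Fin n) (Fin n) ℝ)
    (hM : ∀ t i j, HasDerivAt (fun s => M s i j) (M' t i j) t)
    (hMsymm : ∀ t, (M t).IsSymm)
    (C : ℝ → Matrix (Fin n) (Fin n) ℝ)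
    (J : ℝ → Matrix (Fin 3) (Fin n) ℝ)
    (v v' : ℝ → Fin n → ℝ) (hv : ∀ t, HasDerivAt v (v' t) t)
    (τg τext : ℝ → Fin n → ℝ)
    (u₂ : ℝ → EuclideanSpace ℝ (Fin 3))
    (y₁ y₂ : ℝ → EuclideanSpace ℝ (Fin 3))
    (hy₁ : ∀ t, HasDerivAt y₁ (WithLp.toLp 2 ((J t).mulVec (v t))) t)
    (hy₂ : ∀ t, HasDerivAt y₂ (u₂ t) t)
    (κ : ℝ) (hκ : 0 < κ)
    (K_D : Matrix (Fin n) (Fin n) ℝ) (hKD : K_D.IsSymm) (hKDpsd : K_D.PosSemidef)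
    (hskew : ∀ t, (M' t - (2 : ℝ) • C t)ᵀ = -(M' t - (2 : ℝ) • C t))
    (hdyn : ∀ t, (M t).mulVec (v' t) + (C t).mulVec (v t) + τg t =
      (τg t - (2 * κ) • (J t)ᵀ.mulVec (y₁ t - y₂ t)
        - K_D.mulVec (v t - (J t)ᵀ.mulVec (u₂ t))) + τext t) :
    (∀ t : ℝ,
      deriv (fun s => (1 / 2) * (v s ⬝ᵥ (M s).mulVec (v s)) + κ * ‖y₁ s - y₂ s‖ ^ 2) t
        ≤ ((J t).mulVec (K_D.mulVec (v t)) - (2 * κ) • fun i => (y₁ t - y₂ t) i) ⬝ᵥ u₂ t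
          + v t ⬝ᵥ τext t)
    ∧ ((∀ t, u₂ t = 0) → ∀ t : ℝ,
      deriv (fun s => (1 / 2) * (v s ⬝ᵥ (M s).mulVec (v s)) + κ * ‖y₁ s - y₂ s‖ ^ 2) t
        ≤ v t ⬝ᵥ τext t)
    ∧ ((∀ t, τext t = 0) → ∀ t : ℝ,
      deriv (fun s => (1 / 2) * (v s ⬝ᵥ (M s).mulVec (v s)) + κ * ‖y₁ s - y₂ s‖ ^ 2) t
        ≤ ((J t).mulVec (K_D.mulVec (v t)) - (2 * κ) • fun i => (y₁ t - y₂ t) i) ⬝ᵥ u₂ t) := by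
  have hH t := stmt_5_general (hM t) (hMsymm t) (hv t) (hy₁ t) (hy₂ t) hKDpsd (hskew t) (hdyn t)
  exact ⟨hH, fun hu₂ t => (hH t).trans_eq (by simp [hu₂ t]),
    fun hτext t => (hH t).trans_eq (by rw [hτext t, dotProduct_zero, add_zero])⟩
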